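/- arXiv:1710.00303 — 2 statements merged into one kernel-verified Lean document; each statement's English description precedes it below -/
import Mathlib

section
/- Let g : A → B be a finite homomorphism of commutative Noetherian rings, let p ≥ 0 be an integer, and let M be a finitely generated B-module such that for every prime ideal q of B with M_q ≠ 0 one has height q ≥ p. Then, regarding M as an A-module via g, for every prime ideal 𝔭 of A with M_𝔭 ≠ 0 one has height 𝔭 ≥ p. (In other words, pushforward along a finite ring map preserves the property of being supported in codimension at least p.) -/
/-- **Pushforward along a finite ring map preserves support in codimension ≥ p.**
Let `g : A → B` be a finite homomorphism of commutative Noetherian rings, `p ≥ 0` an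
integer, and `M` a finitely generated `B`-module all of whose support primes `q`
satisfy `height q ≥ p` (where the height of a prime is the Krull dimension of the
localization at it).  Then, regarding `M` as an `A`-module via `g`, every prime `𝔭`
of `A` with `M_𝔭 ≠ 0` satisfies `height 𝔭 ≥ p`. -/
theorem finite_pushforward_preserves_coniveau
    {A B : Type*} [CommRing A] [CommRing B] [IsNoetherianRing A] [IsNoetherianRing B]
    (g : A →+* B) (hg : g.Finite) (p : ℕ)
    (M : Type*) [AddCommGroup M] [Module B M] [Module.Finite B M]
    (hsupp : ∀ (q : Ideal B) (hq : q.IsPrime),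
      haveI := hq
      Nontrivial (LocalizedModule q.primeCompl M) →
        (p : WithBot (WithTop ℕ)) ≤ ringKrullDim (Localization.AtPrime q)) :
    ∀ (𝔭 : Ideal A) (h𝔭 : 𝔭.IsPrime),
      haveI := h𝔭
      letI : Module A M := Module.compHom M g
      Nontrivial (LocalizedModule 𝔭.primeCompl M) →
        (p : WithBot (WithTop ℕ)) ≤ ringKrullDim (Localization.AtPrime 𝔭) := by
  intro 𝔭 h𝔭
  let : Algebra A B := g.toAlgebra
  let : Module A M := Module.compHom M g
  have : Module.Finite A B := hg
  have : Algebra.IsIntegral A B := Algebra.IsIntegral.of_finite A B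
  intro hnt
  have hmem : (⟨𝔭, h𝔭⟩ : PrimeSpectrum A) ∈ Module.support A M := hnt
  rw [Module.mem_support_iff'] at hmem
  obtain ⟨m, hm⟩ := hmem
  obtain ⟨q, hIq, hq, hqp⟩ := Ideal.exists_ideal_over_prime_of_isIntegral 𝔭
    (LinearMap.ker (LinearMap.toSpanSingleton B M m)) (by
      intro a ha
      by_contra hna
      exact hm a hna ha)
  have hqs : (⟨q, hq⟩ : PrimeSpectrum B) ∈ Module.support B M := by
    rw [Module.mem_support_iff']
    exact ⟨m, fun r hr h => hr (hIq h)⟩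
  refine (hsupp q hq hqs).trans ?_
  rw [IsLocalization.AtPrime.ringKrullDim_eq_height q,
    IsLocalization.AtPrime.ringKrullDim_eq_height 𝔭]
  refine WithBot.coe_le_coe.mpr ?_
  have hmono : StrictMono (PrimeSpectrum.comap (algebraMap A B)) := by
    intro x y hxy
    exact Ideal.IsIntegral.comap_lt_comap hxy
  have h := Order.height_le_height_apply_of_strictMono _ hmono ⟨q, hq⟩
  have he : PrimeSpectrum.comap (algebraMap A B) ⟨q, hq⟩ = ⟨𝔭, h𝔭⟩ :=
    PrimeSpectrum.ext hqp
  rw [he, ← PrimeSpectrum.height_eq_orderHeight, ← PrimeSpectrum.height_eq_orderHeight] at h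
  exact h
end

section
/- Let (R, m_R) → (A, m_A) be a flat local homomorphism of Noetherian local rings such that q := m_R·A is a prime ideal of A. Then the height of q equals dim R, every element f ∈ m_A − q is a nonzerodivisor on A, and for every such f the induced map R → A/fA is flat. -/
/-- Elements of an extended ideal, in terms of a finite generating family. -/
lemma aux_mem_map_span {R A : Type*} [CommRing R] [CommRing A] [Algebra R A] {ι : Type*} [Fintype ι]
    (r : ι → R) (b : A) :
    b ∈ Ideal.map (algebraMap R A) (Ideal.span (Set.range r)) ↔ ∃ c : ι → A, ∑ i, r i • c i = b := by
  rw [Ideal.map_span, ← Set.range_comp, Ideal.mem_span_range_iff_exists_fun]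
  simp [Algebra.smul_def, mul_comm]

/-- Flat extension of a colon ideal. -/
lemma aux_colon {R A : Type*} [CommRing R] [CommRing A] [IsNoetherianRing R] [Algebra R A]
    [Module.Flat R A] (I J : Ideal R) (x : R) (hJ : ∀ s, x * s ∈ I → s ∈ J) (b : A)
    (hb : x • b ∈ Ideal.map (algebraMap R A) I) : b ∈ Ideal.map (algebraMap R A) J := by
  obtain ⟨n, r, rfl⟩ := Submodule.fg_iff_exists_fin_generating_family.mp
    (IsNoetherian.noetherian I)
  obtain ⟨c, hc⟩ := (aux_mem_map_span r _).mp hb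
  have h : ∑ i : Option (Fin n), (i.elim x (fun i => - r i)) • (i.elim b c) = 0 := by
    simp [Fintype.sum_option, hc]
  obtain ⟨k, a, y, h1, h2⟩ := Module.Flat.isTrivialRelation_of_sum_smul_eq_zero (R := R) (M := A) h
  have h3 := h1 none
  simp only [Option.elim_none] at h3
  rw [h3]
  refine Ideal.sum_mem _ fun j _ => ?_
  rw [Algebra.smul_def]
  refine Ideal.mul_mem_right _ _ (Ideal.mem_map_of_mem _ (hJ _ ?_))
  have h4 := h2 j
  simp only [Fintype.sum_option, Option.elim_none, Option.elim_some, neg_mul,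
    Finset.sum_neg_distrib] at h4
  rw [add_neg_eq_zero.mp h4]
  exact Ideal.sum_mem _ fun i _ => Ideal.mul_mem_right _ _ (Ideal.subset_span ⟨i, rfl⟩)

/-- Regularity modulo ideals containing a power of the maximal ideal. -/
lemma aux_primary {R A : Type*} [CommRing R] [CommRing A] [IsNoetherianRing R]
    [IsLocalRing R] [Algebra R A] [Module.Flat R A] (f : A)
    (hf : ∀ b, f * b ∈ Ideal.map (algebraMap R A) (IsLocalRing.maximalIdeal R) →
      b ∈ Ideal.map (algebraMap R A) (IsLocalRing.maximalIdeal R))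
    (n : ℕ) (I : Ideal R) : IsLocalRing.maximalIdeal R ^ n ≤ I →
    ∀ a, f * a ∈ Ideal.map (algebraMap R A) I → a ∈ Ideal.map (algebraMap R A) I := by
  induction I using IsNoetherian.induction with
  | hgt I ih =>
  intro hn a ha
  by_cases hI : I = ⊤
  · subst hI; simp [Ideal.map_top]
  classical
  have hex : ∃ k, IsLocalRing.maximalIdeal R ^ k ≤ I := ⟨n, hn⟩
  obtain ⟨k, hk⟩ : ∃ k, Nat.find hex = k + 1 := by
    refine Nat.exists_eq_succ_of_ne_zero fun h0 => hI ?_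
    have := Nat.find_spec hex
    rw [h0, pow_zero, Ideal.one_eq_top] at this
    exact top_le_iff.mp this
  have hk1 : IsLocalRing.maximalIdeal R ^ (k + 1) ≤ I := hk ▸ Nat.find_spec hex
  have hk0 : ¬ IsLocalRing.maximalIdeal R ^ k ≤ I := Nat.find_min hex (by omega)
  obtain ⟨x, hxk, hxI⟩ := SetLike.not_le_iff_exists.mp hk0
  have hlt : I < I ⊔ Ideal.span {x} := by
    refine lt_of_le_of_ne le_sup_left fun h => hxI ?_
    rw [h]
    exact Ideal.mem_sup_right (Ideal.mem_span_singleton_self x)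
  have h1 := ih _ hlt (hn.trans hlt.le) a
    (Ideal.map_mono hlt.le ha)
  rw [Ideal.map_sup, Ideal.map_span, Set.image_singleton, Submodule.mem_sup] at h1
  obtain ⟨i, hi, z, hz, rfl⟩ := h1
  obtain ⟨b, rfl⟩ := Ideal.mem_span_singleton'.mp hz
  refine Ideal.add_mem _ hi ?_
  have h2 : x • (f * b) ∈ Ideal.map (algebraMap R A) I := by
    have := Ideal.sub_mem _ ha (Ideal.mul_mem_left _ f hi)
    rw [Algebra.smul_def]
    convert this using 1
    ring
  have h3 : b ∈ Ideal.map (algebraMap R A) (IsLocalRing.maximalIdeal R) := by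
    refine hf b (aux_colon I _ x (fun s hs => ?_) _ h2)
    by_contra hs'
    have hu : IsUnit s := by simpa using hs'
    exact hxI ((Ideal.mul_unit_mem_iff_mem I hu).mp hs)
  have h4 : b * algebraMap R A x ∈ Ideal.map (algebraMap R A)
      (IsLocalRing.maximalIdeal R * IsLocalRing.maximalIdeal R ^ k) := by
    rw [Ideal.map_mul]
    exact Ideal.mul_mem_mul h3 (Ideal.mem_map_of_mem _ hxk)
  rw [← pow_succ'] at h4
  exact Ideal.map_mono hk1 h4

/-- Regularity modulo all ideals of the base. -/
lemma aux_all {R A : Type*} [CommRing R] [CommRing A] [IsNoetherianRing R] [IsNoetherianRing A]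
    [IsLocalRing R] [IsLocalRing A] [Algebra R A] [Module.Flat R A] (f : A)
    (htop : Ideal.map (algebraMap R A) (IsLocalRing.maximalIdeal R) ≠ ⊤)
    (hf : ∀ b, f * b ∈ Ideal.map (algebraMap R A) (IsLocalRing.maximalIdeal R) →
      b ∈ Ideal.map (algebraMap R A) (IsLocalRing.maximalIdeal R))
    (I : Ideal R) (a : A) (ha : f * a ∈ Ideal.map (algebraMap R A) I) :
    a ∈ Ideal.map (algebraMap R A) I := by
  have key := Ideal.iInf_pow_smul_eq_bot_of_isLocalRing
    (M := A ⧸ Ideal.map (algebraMap R A) I) _ htop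
  rw [← Ideal.Quotient.eq_zero_iff_mem, ← Submodule.mem_bot A, ← key, Submodule.mem_iInf]
  intro n
  have h := aux_primary f hf n (I ⊔ IsLocalRing.maximalIdeal R ^ n) le_sup_right a
    (Ideal.map_mono le_sup_left ha)
  rw [Ideal.map_sup, Ideal.map_pow, Submodule.mem_sup] at h
  obtain ⟨i, hi, z, hz, rfl⟩ := h
  rw [map_add, Ideal.Quotient.eq_zero_iff_mem.mpr hi, zero_add]
  have : Ideal.Quotient.mk (Ideal.map (algebraMap R A) I) z = z • 1 := by
    rw [Algebra.smul_def, mul_one]; rfl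
  rw [this]
  exact Submodule.smul_mem_smul hz trivial

/-- **Flat local maps with prime closed-fiber ideal.**
Let `R → A` be a flat local homomorphism of Noetherian local rings such that
`q := m_R·A` is a prime ideal of `A`.  Then the height of `q` (the Krull dimension of
`A_q`) equals `dim R`, every `f ∈ m_A − q` is a nonzerodivisor on `A`, and for every
such `f` the induced map `R → A/fA` is flat. -/
theorem flat_local_map_with_prime_fiber_ideal
    {R A : Type*} [CommRing R] [CommRing A] [IsNoetherianRing R] [IsNoetherianRing A]
    [IsLocalRing R] [IsLocalRing A] [Algebra R A] [IsLocalHom (algebraMap R A)]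
    [Module.Flat R A]
    (q : Ideal A) (hq : q.IsPrime)
    (hqeq : q = Ideal.map (algebraMap R A) (IsLocalRing.maximalIdeal R)) :
    (haveI := hq; ringKrullDim (Localization.AtPrime q) = ringKrullDim R) ∧
    ∀ f ∈ IsLocalRing.maximalIdeal A, f ∉ q →
      f ∈ nonZeroDivisors A ∧ Module.Flat R (A ⧸ Ideal.span {f}) := by
  have htop : Ideal.map (algebraMap R A) (IsLocalRing.maximalIdeal R) ≠ ⊤ := hqeq ▸ hq.ne_top
  refine ⟨?_, fun f _ hfq => ?_⟩
  · have := hq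
    have : q.LiesOver (IsLocalRing.maximalIdeal R) := by
      refine ⟨le_antisymm ?_ (IsLocalRing.le_maximalIdeal (hq.comap (algebraMap R A)).ne_top)⟩
      exact Ideal.map_le_iff_le_comap.mp hqeq.ge
    rw [IsLocalization.AtPrime.ringKrullDim_eq_height q,
      Ideal.height_eq_height_add_of_liesOver_of_hasGoingDown (IsLocalRing.maximalIdeal R) q,
      ← IsLocalRing.maximalIdeal_height_eq_ringKrullDim]
    have : Nontrivial (A ⧸ Ideal.map (algebraMap R A) (IsLocalRing.maximalIdeal R)) :=
      Ideal.Quotient.nontrivial_iff.mpr htop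
    conv_lhs => rw [hqeq]
    rw [Ideal.map_quotient_self, Ideal.height_bot, add_zero]
  · have hall := aux_all (R := R) f htop (fun b hb => by
      rw [← hqeq] at hb ⊢
      exact (hq.mem_or_mem hb).resolve_left hfq)
    refine ⟨?_, ?_⟩
    · rw [mem_nonZeroDivisors_iff_right]
      intro b hb
      have := hall ⊥ b (by rw [mul_comm, hb]; exact Ideal.zero_mem _)
      simpa [Ideal.map_bot] using this
    · refine Module.Flat.of_forall_isTrivialRelation fun {l r x} h => ?_
      choose a ha using fun i => Ideal.Quotient.mk_surjective (x i)
      have h1 : ∑ i, r i • a i ∈ Ideal.span {f} := by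
        rw [← Ideal.Quotient.eq_zero_iff_mem, ← h, map_sum]
        refine Finset.sum_congr rfl fun i _ => ?_
        rw [← ha i]
        rfl
      obtain ⟨b, hb⟩ := Ideal.mem_span_singleton'.mp h1
      have h2 := hall (Ideal.span (Set.range r)) b
        ((aux_mem_map_span r _).mpr ⟨a, by rw [← hb, mul_comm]⟩)
      obtain ⟨c, hc⟩ := (aux_mem_map_span r _).mp h2
      have h3 : ∑ i, r i • (a i - c i * f) = 0 := by
        simp only [smul_sub, Finset.sum_sub_distrib]
        rw [← hb, ← hc, Finset.sum_mul]
        simp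
      obtain ⟨k, s, y, h4, h5⟩ := Module.Flat.isTrivialRelation_of_sum_smul_eq_zero (R := R) (M := A) h3
      refine ⟨k, s, fun j => Ideal.Quotient.mk _ (y j), fun i => ?_, h5⟩
      have h6 : x i = Ideal.Quotient.mk (Ideal.span {f}) (a i - c i * f) := by
        rw [map_sub, ha, Ideal.Quotient.eq_zero_iff_mem.mpr
          (Ideal.mul_mem_left _ _ (Ideal.mem_span_singleton_self f)), sub_zero]
      have h7 : a i - c i * f = ∑ j, s i j • y j := h4 i
      rw [h6, h7, map_sum]
      rfl
end
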